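/- Let ω be a renormalizer on (−2,2) with L ln ω = 0, and let (Φ,v) be a classical solution of the renormalized harmonic map system on (−2,2)×S² with constants Λ ≥ 1 and a > 0. Then for every 0 < R < 2: ∫_{−R}^{R} ∫_{S²} ( |∇_gΦ|² + e^{4u}|∇_g v|² ) dvol_{g₀} dt ≤ 5000·Λ² / (2−R)². -/

import Mathlib

open Real MeasureTheory Set Filter

noncomputable section

/-- `θ`-partial derivative of a function of `(θ, φ)`. -/
def pdθ (f : ℝ → ℝ → ℝ) : ℝ → ℝ → ℝ := fun θ φ => deriv (fun x => f x φ) θ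

/-- `φ`-partial derivative of a function of `(θ, φ)`. -/
def pdφ (f : ℝ → ℝ → ℝ) : ℝ → ℝ → ℝ := fun θ φ => deriv (fun x => f θ x) φ

/-- coordinate derivative in direction `i` (`0 = θ`, `1 = φ`). -/
def pder2 (i : Fin 2) : (ℝ → ℝ → ℝ) → (ℝ → ℝ → ℝ) := if i = 0 then pdθ else pdφ

/-- Christoffel symbols `Γ^m_{i j}` of the round metric on `S²` in `(θ, φ)`. -/
def christoffel (m i j : Fin 2) (θ : ℝ) : ℝ :=
  if m = 0 ∧ i = 1 ∧ j = 1 then -(Real.sin θ * Real.cos θ)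
  else if m = 1 ∧ ((i = 0 ∧ j = 1) ∨ (i = 1 ∧ j = 0)) then Real.cos θ / Real.sin θ
  else 0

/-- covariant derivative (in the round metric) of a `k`-tensor on `S²`,
given by its coordinate components. -/
def covDer {k : ℕ} (T : (Fin k → Fin 2) → ℝ → ℝ → ℝ) :
    (Fin (k + 1) → Fin 2) → ℝ → ℝ → ℝ := fun I θ φ =>
  pder2 (I 0) (T fun j => I j.succ) θ φ
    - ∑ j : Fin k, ∑ m : Fin 2,
        christoffel m (I 0) (I j.succ) θ *
          T (Function.update (fun j' => I j'.succ) j m) θ φ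

/-- the `k`-th covariant derivative of a function on `S²`. -/
def covIter (f : ℝ → ℝ → ℝ) : (k : ℕ) → (Fin k → Fin 2) → ℝ → ℝ → ℝ
  | 0 => fun _ => f
  | k + 1 => covDer (covIter f k)

/-- inverse-metric weight used to compute tensor norms. -/
def sphWeight (i : Fin 2) (θ : ℝ) : ℝ := if i = 0 then 1 else (Real.sin θ ^ 2)⁻¹

/-- `|∇_{g₀}^k f|`, the norm of the `k`-th covariant derivative in the round metric. -/
def covNorm (k : ℕ) (f : ℝ → ℝ → ℝ) (θ φ : ℝ) : ℝ :=
  Real.sqrt (∑ I : Fin k → Fin 2, (∏ j, sphWeight (I j) θ) * (covIter f k I θ φ) ^ 2)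

/-- `∇_{g₀}f·∇_{g₀}h` on the round sphere. -/
def gradDotS2 (f g : ℝ → ℝ → ℝ) (θ φ : ℝ) : ℝ :=
  pdθ f θ φ * pdθ g θ φ + (Real.sin θ ^ 2)⁻¹ * pdφ f θ φ * pdφ g θ φ

/-- `|∇_{g₀}f|²` on the round sphere. -/
def gradNormSqS2 (f : ℝ → ℝ → ℝ) (θ φ : ℝ) : ℝ := gradDotS2 f f θ φ

/-- `Δ_{g₀}f`, the round Laplacian in coordinates. -/
def lapS2 (f : ℝ → ℝ → ℝ) (θ φ : ℝ) : ℝ :=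
  pdθ (pdθ f) θ φ + (Real.cos θ / Real.sin θ) * pdθ f θ φ +
    (Real.sin θ ^ 2)⁻¹ * pdφ (pdφ f) θ φ

/-- integral over `S²` with respect to `dvol_{g₀} = sinθ dθ dφ`. -/
def sphInt (f : ℝ → ℝ → ℝ) : ℝ :=
  ∫ θ in Ioo (0 : ℝ) π, (∫ φ in Ioo (0 : ℝ) (2 * π), f θ φ) * Real.sin θ

/-- round distance between the points with coordinates `(θ, φ)` and `(θ', φ')`. -/
def sDist (θ φ θ' φ' : ℝ) : ℝ :=
  Real.arccos (Real.cos θ * Real.cos θ' + Real.sin θ * Real.sin θ' * Real.cos (φ - φ'))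

/-- a function on `S²` (in coordinates), of class `C^k`, with bounded covariant
derivatives up to order `k`. -/
def CkSphere (k : ℕ) (f : ℝ → ℝ → ℝ) : Prop :=
  ContDiffOn ℝ k (fun p : ℝ × ℝ => f p.1 p.2) (Ioo 0 π ×ˢ (univ : Set ℝ)) ∧
  (∀ θ φ : ℝ, f θ (φ + 2 * π) = f θ φ) ∧
  ∃ C : ℝ, ∀ j ≤ k, ∀ θ ∈ Ioo (0 : ℝ) π, ∀ φ : ℝ, covNorm j f θ φ ≤ C

/-- a smooth function on `S²` (in coordinates), with bounded covariant derivatives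
of all orders. -/
def SmoothSphere (f : ℝ → ℝ → ℝ) : Prop :=
  ContDiffOn ℝ (⊤ : ℕ∞) (fun p : ℝ × ℝ => f p.1 p.2) (Ioo 0 π ×ˢ (univ : Set ℝ)) ∧
  (∀ θ φ : ℝ, f θ (φ + 2 * π) = f θ φ) ∧
  ∀ j : ℕ, ∃ C : ℝ, ∀ θ ∈ Ioo (0 : ℝ) π, ∀ φ : ℝ, covNorm j f θ φ ≤ C
/-- `t`-partial derivative on the cylinder. -/
def cdt (F : ℝ → ℝ → ℝ → ℝ) : ℝ → ℝ → ℝ → ℝ := fun t θ φ => deriv (fun s => F s θ φ) t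

/-- `θ`-partial derivative on the cylinder. -/
def cdθ (F : ℝ → ℝ → ℝ → ℝ) : ℝ → ℝ → ℝ → ℝ := fun t => pdθ (F t)

/-- `φ`-partial derivative on the cylinder. -/
def cdφ (F : ℝ → ℝ → ℝ → ℝ) : ℝ → ℝ → ℝ → ℝ := fun t => pdφ (F t)

/-- the operator `L = ∂_t² − ∂_t + Δ_{g₀}` on the cylinder. -/
def cL (F : ℝ → ℝ → ℝ → ℝ) : ℝ → ℝ → ℝ → ℝ := fun t θ φ =>
  cdt (cdt F) t θ φ - cdt F t θ φ + lapS2 (F t) θ φ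

/-- `∇_g F·∇_g G` for the product metric `g = dt² + g₀`. -/
def cgradDot (F G : ℝ → ℝ → ℝ → ℝ) (t θ φ : ℝ) : ℝ :=
  cdt F t θ φ * cdt G t θ φ + gradDotS2 (F t) (G t) θ φ

/-- `|∇_g F|²` for the product metric `g = dt² + g₀`. -/
def cgradNormSq (F : ℝ → ℝ → ℝ → ℝ) (t θ φ : ℝ) : ℝ := cgradDot F F t θ φ

/-- a renormalizer `ω` on the interval `I`: positive and smooth away from the poles,
with `ln ω − ln sinθ` extending continuously to `I×S²` together with all its
coordinate derivatives of order `≤ 10`, bounded in absolute value by `A₁ ≥ 1`. -/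
structure Renormalizer (I : Set ℝ) (A₁ : ℝ) : Type where
  ω : ℝ → ℝ → ℝ → ℝ
  A₁_ge : 1 ≤ A₁
  pos : ∀ t ∈ I, ∀ θ ∈ Ioo (0 : ℝ) π, ∀ φ : ℝ, 0 < ω t θ φ
  periodic : ∀ t θ φ : ℝ, ω t θ (φ + 2 * π) = ω t θ φ
  smooth : ContDiffOn ℝ (⊤ : ℕ∞) (fun p : ℝ × ℝ × ℝ => ω p.1 p.2.1 p.2.2)
    (I ×ˢ (Ioo (0 : ℝ) π ×ˢ (univ : Set ℝ)))
  deriv_ext : ∀ m l n : ℕ, m + l + n ≤ 10 →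
    ∃ G : ℝ → ℝ → ℝ → ℝ,
      ContinuousOn (fun p : ℝ × ℝ × ℝ => G p.1 p.2.1 p.2.2)
        (I ×ˢ (Icc (0 : ℝ) π ×ˢ (univ : Set ℝ))) ∧
      (∀ t ∈ I, ∀ θ ∈ Ioo (0 : ℝ) π, ∀ φ : ℝ,
        G t θ φ = (cdt^[m] (cdθ^[l] (cdφ^[n]
          (fun t θ φ => Real.log (ω t θ φ) - Real.log (Real.sin θ))))) t θ φ) ∧
      (∀ t ∈ I, ∀ θ ∈ Icc (0 : ℝ) π, ∀ φ : ℝ, |G t θ φ| ≤ A₁)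

/-- a classical solution `(Φ, v)` of the renormalized harmonic map system on `I×S²`,
with constants `Λ ≥ 1` and `a > 0`:  `C³` on `I×S²` and smooth in `t` and `φ`,
satisfying `LΦ = 2e^{4u}|∇_g v|² + L ln ω` and `Lv = −4∇_g u·∇_g v` (where
`u = Φ − ln ω`), `|Φ| ≤ Λ`, with locally finite renormalized energy, and with
traces `v = a` at the north pole and `v = −a` at the south pole. -/
structure RHMSolution (I : Set ℝ) (A₁ : ℝ) (R : Renormalizer I A₁) (Λ a : ℝ) :
    Type where
  Φ : ℝ → ℝ → ℝ → ℝ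
  v : ℝ → ℝ → ℝ → ℝ
  Λ_ge : 1 ≤ Λ
  a_pos : 0 < a
  periodicΦ : ∀ t θ φ : ℝ, Φ t θ (φ + 2 * π) = Φ t θ φ
  periodicv : ∀ t θ φ : ℝ, v t θ (φ + 2 * π) = v t θ φ
  regΦ : ContDiffOn ℝ 3 (fun p : ℝ × ℝ × ℝ => Φ p.1 p.2.1 p.2.2)
    (I ×ˢ (Icc (0 : ℝ) π ×ˢ (univ : Set ℝ)))
  regv : ContDiffOn ℝ 3 (fun p : ℝ × ℝ × ℝ => v p.1 p.2.1 p.2.2)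
    (I ×ˢ (Icc (0 : ℝ) π ×ˢ (univ : Set ℝ)))
  smooth_tφ_Φ : ∀ θ ∈ Icc (0 : ℝ) π,
    ContDiffOn ℝ (⊤ : ℕ∞) (fun q : ℝ × ℝ => Φ q.1 θ q.2) (I ×ˢ (univ : Set ℝ))
  smooth_tφ_v : ∀ θ ∈ Icc (0 : ℝ) π,
    ContDiffOn ℝ (⊤ : ℕ∞) (fun q : ℝ × ℝ => v q.1 θ q.2) (I ×ˢ (univ : Set ℝ))
  eqΦ : ∀ t ∈ I, ∀ θ ∈ Ioo (0 : ℝ) π, ∀ φ : ℝ,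
    cL Φ t θ φ =
      2 * Real.exp (4 * (Φ t θ φ - Real.log (R.ω t θ φ))) * cgradNormSq v t θ φ
        + cL (fun t θ φ => Real.log (R.ω t θ φ)) t θ φ
  eqv : ∀ t ∈ I, ∀ θ ∈ Ioo (0 : ℝ) π, ∀ φ : ℝ,
    cL v t θ φ =
      -4 * cgradDot (fun t θ φ => Φ t θ φ - Real.log (R.ω t θ φ)) v t θ φ
  bddΦ : ∀ t ∈ I, ∀ θ ∈ Icc (0 : ℝ) π, ∀ φ : ℝ, |Φ t θ φ| ≤ Λ
  energy_loc : ∀ J : Set ℝ, J ⊆ I → IsCompact J →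
    IntegrableOn (fun p : ℝ × ℝ × ℝ =>
      (cgradNormSq Φ p.1 p.2.1 p.2.2
        + ((R.ω p.1 p.2.1 p.2.2) ^ 4)⁻¹ * cgradNormSq v p.1 p.2.1 p.2.2)
        * Real.sin p.2.1)
      (J ×ˢ (Ioo (0 : ℝ) π ×ˢ Ioo (0 : ℝ) (2 * π))) volume
  traceN : ∀ t ∈ I, ∀ φ : ℝ, v t 0 φ = a
  traceS : ∀ t ∈ I, ∀ φ : ℝ, v t π φ = -a

set_option maxHeartbeats 1000000

/-- the regular part of the cylinder in coordinates -/
def regU : Set (ℝ × ℝ × ℝ) := Ioo (-2 : ℝ) 2 ×ˢ (Ioo (0 : ℝ) π ×ˢ (univ : Set ℝ))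

/-- uncurrying -/
def unc (F : ℝ → ℝ → ℝ → ℝ) : ℝ × ℝ × ℝ → ℝ := fun p => F p.1 p.2.1 p.2.2

lemma isOpen_regU : IsOpen regU := isOpen_Ioo.prod (isOpen_Ioo.prod isOpen_univ)

lemma hasDeriv_t {F : ℝ → ℝ → ℝ → ℝ} {t θ φ : ℝ} (h : DifferentiableAt ℝ (unc F) (t, θ, φ)) :
    HasDerivAt (fun s => F s θ φ) (fderiv ℝ (unc F) (t, θ, φ) (1, 0, 0)) t := by
  have h2 : HasDerivAt (fun s : ℝ => ((s, θ, φ) : ℝ × ℝ × ℝ)) (1, 0, 0) t :=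
    (hasDerivAt_id t).prodMk ((hasDerivAt_const t θ).prodMk (hasDerivAt_const t φ))
  exact h.hasFDerivAt.comp_hasDerivAt t h2

lemma hasDeriv_θ {F : ℝ → ℝ → ℝ → ℝ} {t θ φ : ℝ} (h : DifferentiableAt ℝ (unc F) (t, θ, φ)) :
    HasDerivAt (fun s => F t s φ) (fderiv ℝ (unc F) (t, θ, φ) (0, 1, 0)) θ := by
  have h2 : HasDerivAt (fun s : ℝ => ((t, s, φ) : ℝ × ℝ × ℝ)) (0, 1, 0) θ :=
    (hasDerivAt_const θ t).prodMk ((hasDerivAt_id θ).prodMk (hasDerivAt_const θ φ))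
  exact h.hasFDerivAt.comp_hasDerivAt θ h2

lemma hasDeriv_φ {F : ℝ → ℝ → ℝ → ℝ} {t θ φ : ℝ} (h : DifferentiableAt ℝ (unc F) (t, θ, φ)) :
    HasDerivAt (fun s => F t θ s) (fderiv ℝ (unc F) (t, θ, φ) (0, 0, 1)) φ := by
  have h2 : HasDerivAt (fun s : ℝ => ((t, θ, s) : ℝ × ℝ × ℝ)) (0, 0, 1) φ :=
    (hasDerivAt_const φ t).prodMk ((hasDerivAt_const φ θ).prodMk (hasDerivAt_id φ))
  exact h.hasFDerivAt.comp_hasDerivAt φ h2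

lemma diffAt_of {F : ℝ → ℝ → ℝ → ℝ} {n : WithTop ℕ∞} (hn : 1 ≤ n)
    (h : ContDiffOn ℝ n (unc F) regU)
    {p : ℝ × ℝ × ℝ} (hp : p ∈ regU) : DifferentiableAt ℝ (unc F) p :=
  ((h.differentiableOn (by positivity)) p hp).differentiableAt (isOpen_regU.mem_nhds hp)

lemma contDiff_t {F : ℝ → ℝ → ℝ → ℝ} {m n : WithTop ℕ∞} (hn : m + 1 ≤ n)
    (h : ContDiffOn ℝ n (unc F) regU) : ContDiffOn ℝ m (unc (cdt F)) regU := by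
  have h1 := h.fderiv_of_isOpen isOpen_regU hn
  refine (h1.clm_apply (contDiffOn_const (c := ((1, 0, 0) : ℝ × ℝ × ℝ)))).congr ?_
  intro p hp
  exact (hasDeriv_t (diffAt_of (le_trans (by simp) hn) h hp)).deriv

lemma contDiff_θ {F : ℝ → ℝ → ℝ → ℝ} {m n : WithTop ℕ∞} (hn : m + 1 ≤ n)
    (h : ContDiffOn ℝ n (unc F) regU) : ContDiffOn ℝ m (unc (cdθ F)) regU := by
  have h1 := h.fderiv_of_isOpen isOpen_regU hn
  refine (h1.clm_apply (contDiffOn_const (c := ((0, 1, 0) : ℝ × ℝ × ℝ)))).congr ?_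
  intro p hp
  exact (hasDeriv_θ (diffAt_of (le_trans (by simp) hn) h hp)).deriv

lemma contDiff_φ {F : ℝ → ℝ → ℝ → ℝ} {m n : WithTop ℕ∞} (hn : m + 1 ≤ n)
    (h : ContDiffOn ℝ n (unc F) regU) : ContDiffOn ℝ m (unc (cdφ F)) regU := by
  have h1 := h.fderiv_of_isOpen isOpen_regU hn
  refine (h1.clm_apply (contDiffOn_const (c := ((0, 0, 1) : ℝ × ℝ × ℝ)))).congr ?_
  intro p hp
  exact (hasDeriv_φ (diffAt_of (le_trans (by simp) hn) h hp)).deriv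

lemma hasDeriv_cdt {F : ℝ → ℝ → ℝ → ℝ} {n : WithTop ℕ∞} (hn : 1 ≤ n)
    (h : ContDiffOn ℝ n (unc F) regU) {t θ φ : ℝ} (hp : (t, θ, φ) ∈ regU) :
    HasDerivAt (fun s => F s θ φ) (cdt F t θ φ) t :=
  (hasDeriv_t (diffAt_of hn h hp)).differentiableAt.hasDerivAt

lemma hasDeriv_cdθ {F : ℝ → ℝ → ℝ → ℝ} {n : WithTop ℕ∞} (hn : 1 ≤ n)
    (h : ContDiffOn ℝ n (unc F) regU) {t θ φ : ℝ} (hp : (t, θ, φ) ∈ regU) :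
    HasDerivAt (fun s => F t s φ) (cdθ F t θ φ) θ :=
  (hasDeriv_θ (diffAt_of hn h hp)).differentiableAt.hasDerivAt

lemma hasDeriv_cdφ {F : ℝ → ℝ → ℝ → ℝ} {n : WithTop ℕ∞} (hn : 1 ≤ n)
    (h : ContDiffOn ℝ n (unc F) regU) {t θ φ : ℝ} (hp : (t, θ, φ) ∈ regU) :
    HasDerivAt (fun s => F t θ s) (cdφ F t θ φ) φ :=
  (hasDeriv_φ (diffAt_of hn h hp)).differentiableAt.hasDerivAt

/-- closed coordinate box -/
def box (a b c d e f : ℝ) : Set (ℝ × ℝ × ℝ) := Icc a b ×ˢ (Icc c d ×ˢ Icc e f)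

lemma isCompact_box (a b c d e f : ℝ) : IsCompact (box a b c d e f) :=
  isCompact_Icc.prod (isCompact_Icc.prod isCompact_Icc)

lemma box_int_t {a b c d e f : ℝ} {D : ℝ × ℝ × ℝ → ℝ} (hD : ContinuousOn D (box a b c d e f))
    (h : ∀ θ ∈ Icc c d, ∀ φ ∈ Icc e f, ∫ t in Icc a b, D (t, θ, φ) = 0) :
    ∫ p in box a b c d e f, D p = 0 := by
  have hi : IntegrableOn D (box a b c d e f) volume :=
    hD.integrableOn_compact (isCompact_box ..)
  unfold box at *
  rw [IntegrableOn, Measure.volume_eq_prod, ← Measure.prod_restrict] at hi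
  rw [Measure.volume_eq_prod, ← Measure.prod_restrict, integral_prod_symm _ hi]
  apply setIntegral_eq_zero_of_forall_eq_zero
  rintro ⟨θ, φ⟩ ⟨h1, h2⟩
  exact h θ h1 φ h2

lemma box_int_φ {a b c d e f : ℝ} {D : ℝ × ℝ × ℝ → ℝ} (hD : ContinuousOn D (box a b c d e f))
    (h : ∀ t ∈ Icc a b, ∀ θ ∈ Icc c d, ∫ φ in Icc e f, D (t, θ, φ) = 0) :
    ∫ p in box a b c d e f, D p = 0 := by
  have hi : IntegrableOn D (box a b c d e f) volume :=
    hD.integrableOn_compact (isCompact_box ..)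
  unfold box at *
  rw [Measure.volume_eq_prod] at hi
  rw [Measure.volume_eq_prod, setIntegral_prod _ hi]
  apply setIntegral_eq_zero_of_forall_eq_zero
  intro t ht
  have hc : ContinuousOn (fun q : ℝ × ℝ => D (t, q)) (Icc c d ×ˢ Icc e f) :=
    hD.comp (by fun_prop) (fun q hq => ⟨ht, hq⟩)
  have hi2 : IntegrableOn (fun q : ℝ × ℝ => D (t, q)) (Icc c d ×ˢ Icc e f) volume :=
    hc.integrableOn_compact (isCompact_Icc.prod isCompact_Icc)
  rw [Measure.volume_eq_prod] at hi2
  rw [Measure.volume_eq_prod, setIntegral_prod _ hi2]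
  apply setIntegral_eq_zero_of_forall_eq_zero
  intro θ hθ
  exact h t ht θ hθ

lemma setInt_le {α : Type*} [MeasurableSpace α] {μ : Measure α} {s : Set α} (hs : MeasurableSet s)
    (hfin : μ s ≠ ⊤) {f : α → ℝ} {K : ℝ} (hK : 0 ≤ K) (h : ∀ x ∈ s, f x ≤ K) :
    ∫ x in s, f x ∂μ ≤ K * μ.real s := by
  by_cases hf : IntegrableOn f s μ
  · calc ∫ x in s, f x ∂μ ≤ ∫ x in s, K ∂μ :=
          setIntegral_mono_on hf (integrableOn_const hfin) hs h
      _ = K * μ.real s := by simp [mul_comm]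
  · rw [integral_undef hf]; positivity

lemma box_int_θ {a b c d e f K : ℝ} (hK : 0 ≤ K) (hab : a ≤ b) (hef : e ≤ f)
    {D : ℝ × ℝ × ℝ → ℝ} (hD : ContinuousOn D (box a b c d e f))
    (h : ∀ t ∈ Icc a b, ∀ φ ∈ Icc e f, ∫ θ in Icc c d, D (t, θ, φ) ≤ K) :
    ∫ p in box a b c d e f, D p ≤ K * (f - e) * (b - a) := by
  have hi : IntegrableOn D (box a b c d e f) volume :=
    hD.integrableOn_compact (isCompact_box ..)
  unfold box at *
  rw [Measure.volume_eq_prod] at hi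
  rw [Measure.volume_eq_prod, setIntegral_prod _ hi]
  have hba : (volume : Measure ℝ).real (Icc a b) = b - a := by simp [hab]
  have hfe : (volume : Measure ℝ).real (Icc e f) = f - e := by simp [hef]
  rw [← hba, ← hfe]
  refine setInt_le measurableSet_Icc (by simp) (by positivity) ?_
  intro t ht
  have hc : ContinuousOn (fun q : ℝ × ℝ => D (t, q)) (Icc c d ×ˢ Icc e f) :=
    hD.comp (by fun_prop) (fun q hq => ⟨ht, hq⟩)
  have hi2 : IntegrableOn (fun q : ℝ × ℝ => D (t, q)) (Icc c d ×ˢ Icc e f) volume :=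
    hc.integrableOn_compact (isCompact_Icc.prod isCompact_Icc)
  rw [IntegrableOn, Measure.volume_eq_prod, ← Measure.prod_restrict] at hi2
  rw [Measure.volume_eq_prod, ← Measure.prod_restrict, integral_prod_symm _ hi2]
  refine setInt_le measurableSet_Icc (by simp) hK ?_
  intro φ hφ
  exact h t ht φ hφ

lemma ftc_Icc {a b : ℝ} (hab : a ≤ b) {f f' : ℝ → ℝ} (h : ∀ x ∈ Icc a b, HasDerivAt f (f' x) x)
    (hc : ContinuousOn f' (Icc a b)) : ∫ x in Icc a b, f' x = f b - f a := by
  rw [integral_Icc_eq_integral_Ioc, ← intervalIntegral.integral_of_le hab]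
  rw [← uIcc_of_le hab] at h hc
  exact intervalIntegral.integral_eq_sub_of_hasDerivAt h hc.intervalIntegrable

/-- the divergence identity integrated over a box avoiding the poles -/
lemma core {Φ : ℝ → ℝ → ℝ → ℝ} (hΦ : ContDiffOn ℝ 2 (unc Φ) regU)
    (per : ∀ t θ φ : ℝ, Φ t θ (φ + 2 * π) = Φ t θ φ)
    {c r K ε : ℝ} (hr0 : 0 < r) (hr : r < 2) (hε : 0 < ε) (hε2 : ε < π / 2)
    (hK : ∀ t ∈ Icc (-r) r, ∀ θ ∈ Ioo 0 π, ∀ φ ∈ Icc 0 (2 * π),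
      |(Φ t θ φ + c) * cdθ Φ t θ φ| ≤ K) :
    IntegrableOn (fun p : ℝ × ℝ × ℝ => ((r ^ 2 - p.1 ^ 2) ^ 2 * Real.sin p.2.1 *
        (cgradNormSq Φ p.1 p.2.1 p.2.2 + (Φ p.1 p.2.1 p.2.2 + c) * cL Φ p.1 p.2.1 p.2.2)
        - Real.sin p.2.1 * ((12 * p.1 ^ 2 - 4 * r ^ 2) - 4 * p.1 * (r ^ 2 - p.1 ^ 2)) *
          (Φ p.1 p.2.1 p.2.2 + c) ^ 2 / 2))
      (box (-r) r ε (π - ε) 0 (2 * π)) volume ∧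
    ∫ p in box (-r) r ε (π - ε) 0 (2 * π), ((r ^ 2 - p.1 ^ 2) ^ 2 * Real.sin p.2.1 *
        (cgradNormSq Φ p.1 p.2.1 p.2.2 + (Φ p.1 p.2.1 p.2.2 + c) * cL Φ p.1 p.2.1 p.2.2)
        - Real.sin p.2.1 * ((12 * p.1 ^ 2 - 4 * r ^ 2) - 4 * p.1 * (r ^ 2 - p.1 ^ 2)) *
          (Φ p.1 p.2.1 p.2.2 + c) ^ 2 / 2)
      ≤ 32 * K * Real.sin ε * (2 * π - 0) * (r - -r) := by
  have hsub : box (-r) r ε (π - ε) 0 (2 * π) ⊆ regU := by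
    rintro ⟨t, θ, φ⟩ ⟨⟨h1, h2⟩, ⟨h3, h4⟩, -⟩
    exact ⟨⟨by dsimp only at *; linarith, by dsimp only at *; linarith⟩,
      ⟨by dsimp only at *; linarith, by dsimp only at *; linarith⟩, trivial⟩
  have mem : ∀ t ∈ Icc (-r) r, ∀ θ ∈ Icc ε (π - ε), ∀ φ : ℝ, (t, θ, φ) ∈ regU := by
    rintro t ⟨h1, h2⟩ θ ⟨h3, h4⟩ φ
    exact ⟨⟨by dsimp only at *; linarith, by dsimp only at *; linarith⟩,
      ⟨by dsimp only at *; linarith, by dsimp only at *; linarith⟩, trivial⟩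
  have one : (1 : WithTop ℕ∞) + 1 ≤ 2 := by norm_num
  have one' : (1 : WithTop ℕ∞) ≤ 2 := by norm_num
  have zero : (0 : WithTop ℕ∞) + 1 ≤ 1 := by norm_num
  have c0 := (hΦ.continuousOn).mono hsub
  have Ht := contDiff_t one hΦ
  have Hθ := contDiff_θ one hΦ
  have Hφ := contDiff_φ one hΦ
  have ct := Ht.continuousOn.mono hsub
  have cθ := Hθ.continuousOn.mono hsub
  have cφ := Hφ.continuousOn.mono hsub
  have ctt := (contDiff_t zero Ht).continuousOn.mono hsub
  have cθθ := (contDiff_θ zero Hθ).continuousOn.mono hsub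
  have cφφ := (contDiff_φ zero Hφ).continuousOn.mono hsub
  have sinpos : ∀ θ ∈ Icc ε (π - ε), 0 < Real.sin θ := fun θ h =>
    Real.sin_pos_of_pos_of_lt_pi (by linarith [h.1]) (by linarith [h.2])
  have csin : ContinuousOn (fun p : ℝ × ℝ × ℝ => (Real.sin p.2.1)⁻¹)
      (box (-r) r ε (π - ε) 0 (2 * π)) := by
    refine ContinuousOn.inv₀ (by fun_prop) ?_
    rintro ⟨t, θ, φ⟩ ⟨_, h, _⟩
    exact (sinpos θ h).ne'
  let D1 : ℝ × ℝ × ℝ → ℝ := fun p => Real.sin p.2.1 * ((r ^ 2 - p.1 ^ 2) ^ 2 * unc (cdt Φ) p ^ 2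
      + (r ^ 2 - p.1 ^ 2) ^ 2 * (unc Φ p + c) * unc (cdt (cdt Φ)) p
      - (1 / 2) * ((12 * p.1 ^ 2 - 4 * r ^ 2) - 4 * p.1 * (r ^ 2 - p.1 ^ 2)) * (unc Φ p + c) ^ 2
      - (r ^ 2 - p.1 ^ 2) ^ 2 * (unc Φ p + c) * unc (cdt Φ) p)
  let D2 : ℝ × ℝ × ℝ → ℝ := fun p => (r ^ 2 - p.1 ^ 2) ^ 2 *
      (Real.cos p.2.1 * (unc Φ p + c) * unc (cdθ Φ) p + Real.sin p.2.1 * unc (cdθ Φ) p ^ 2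
        + Real.sin p.2.1 * (unc Φ p + c) * unc (cdθ (cdθ Φ)) p)
  let D3 : ℝ × ℝ × ℝ → ℝ := fun p => (r ^ 2 - p.1 ^ 2) ^ 2 * (Real.sin p.2.1)⁻¹ *
      (unc (cdφ Φ) p ^ 2 + (unc Φ p + c) * unc (cdφ (cdφ Φ)) p)
  have cD1 : ContinuousOn D1 (box (-r) r ε (π - ε) 0 (2 * π)) := by
    unfold D1; fun_prop
  have cD2 : ContinuousOn D2 (box (-r) r ε (π - ε) 0 (2 * π)) := by
    unfold D2; fun_prop
  have cD3 : ContinuousOn D3 (box (-r) r ε (π - ε) 0 (2 * π)) := by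
    unfold D3; fun_prop
  have i1 := cD1.integrableOn_compact (μ := volume) (isCompact_box ..)
  have i2 := cD2.integrableOn_compact (μ := volume) (isCompact_box ..)
  have i3 := cD3.integrableOn_compact (μ := volume) (isCompact_box ..)
  have hpi := Real.pi_pos
  have e1 : ∫ p in box (-r) r ε (π - ε) 0 (2 * π), D1 p = 0 := by
    refine box_int_t cD1 ?_
    intro θ hθ φ hφ
    rw [ftc_Icc (by linarith) (f := fun t => Real.sin θ * ((r ^ 2 - t ^ 2) ^ 2 * (Φ t θ φ + c) *
      cdt Φ t θ φ + 2 * t * (r ^ 2 - t ^ 2) * (Φ t θ φ + c) ^ 2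
      - (1 / 2) * (r ^ 2 - t ^ 2) ^ 2 * (Φ t θ φ + c) ^ 2))]
    · ring
    · intro t ht
      have hp := mem t ht θ hθ φ
      have d0 := (hasDeriv_cdt one' hΦ hp).add_const c
      have d1 := hasDeriv_cdt le_rfl Ht hp
      have dz : HasDerivAt (fun t : ℝ => r ^ 2 - t ^ 2) (-(2 * t)) t := by
        simpa using ((hasDerivAt_id t).pow 2).const_sub (r ^ 2)
      have dl : HasDerivAt (fun t : ℝ => 2 * t) 2 t := by
        simpa using (hasDerivAt_id t).const_mul 2
      have := (((((dz.pow 2).mul d0).mul d1).add ((dl.mul dz).mul (d0.pow 2))).sub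
        (((dz.pow 2).const_mul (1 / 2)).mul (d0.pow 2))).const_mul (Real.sin θ)
      refine this.congr_deriv ?_
      simp only [D1, unc, Pi.mul_apply, Pi.pow_apply]
      push_cast
      ring
    · exact cD1.comp (f := fun t : ℝ => (t, θ, φ)) (by fun_prop) (fun t ht => ⟨ht, hθ, hφ⟩)
  have e3 : ∫ p in box (-r) r ε (π - ε) 0 (2 * π), D3 p = 0 := by
    refine box_int_φ cD3 ?_
    intro t ht θ hθ
    rw [ftc_Icc (by linarith) (f := fun φ => (r ^ 2 - t ^ 2) ^ 2 * (Real.sin θ)⁻¹ *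
      ((Φ t θ φ + c) * cdφ Φ t θ φ))]
    · have p1 : Φ t θ (2 * π) = Φ t θ 0 := by simpa using per t θ 0
      have p2 : cdφ Φ t θ (2 * π) = cdφ Φ t θ 0 := by
        have : (fun x => Φ t θ x) = fun x => Φ t θ (x + 2 * π) := by
          funext x; exact (per t θ x).symm
        simp only [cdφ, pdφ]
        conv_rhs => rw [this]
        rw [deriv_comp_add_const]; simp
      rw [p1, p2]; ring
    · intro φ hφ
      have hp := mem t ht θ hθ φ
      have d0 := (hasDeriv_cdφ one' hΦ hp).add_const c
      have d1 := hasDeriv_cdφ le_rfl Hφ hp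
      refine ((d0.mul d1).const_mul ((r ^ 2 - t ^ 2) ^ 2 * (Real.sin θ)⁻¹)).congr_deriv ?_
      simp only [D3, unc]
      ring
    · exact cD3.comp (f := fun φ : ℝ => (t, θ, φ)) (by fun_prop) (fun φ hφ => ⟨ht, hθ, hφ⟩)
  have hK0 : 0 ≤ K := (abs_nonneg _).trans
    (hK 0 ⟨by linarith, by linarith⟩ (π / 2) ⟨by linarith, by linarith⟩ 0 ⟨le_rfl, by linarith⟩)
  have sε : 0 < Real.sin ε := Real.sin_pos_of_pos_of_lt_pi hε (by linarith)
  have e2 : ∫ p in box (-r) r ε (π - ε) 0 (2 * π), D2 p ≤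
      32 * K * Real.sin ε * (2 * π - 0) * (r - -r) := by
    refine box_int_θ (by positivity) (by linarith) (by linarith) cD2 ?_
    intro t ht φ hφ
    rw [ftc_Icc (by linarith) (f := fun θ => (r ^ 2 - t ^ 2) ^ 2 * (Real.sin θ *
      ((Φ t θ φ + c) * cdθ Φ t θ φ)))]
    · have k1 := abs_le.1 (hK t ht (π - ε) ⟨by linarith, by linarith⟩ φ hφ)
      have k2 := abs_le.1 (hK t ht ε ⟨by linarith, by linarith⟩ φ hφ)
      rw [Real.sin_pi_sub]
      have z0 : 0 ≤ r ^ 2 - t ^ 2 := by nlinarith [ht.1, ht.2]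
      have z1 : r ^ 2 - t ^ 2 ≤ 4 := by nlinarith
      have z2 : (r ^ 2 - t ^ 2) ^ 2 ≤ 16 := by nlinarith
      rw [← mul_sub, ← mul_sub]
      calc _ ≤ (r ^ 2 - t ^ 2) ^ 2 * (Real.sin ε * (2 * K)) := by
            gcongr; linarith [k1.2, k2.1]
        _ ≤ 16 * (Real.sin ε * (2 * K)) := by gcongr
        _ = _ := by ring
    · intro θ hθ
      have hp := mem t ht θ hθ φ
      have d0 := (hasDeriv_cdθ one' hΦ hp).add_const c
      have d1 := hasDeriv_cdθ le_rfl Hθ hp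
      refine (((Real.hasDerivAt_sin θ).mul (d0.mul d1)).const_mul
        ((r ^ 2 - t ^ 2) ^ 2)).congr_deriv ?_
      simp only [D2, unc, Pi.mul_apply]
      ring
    · exact cD2.comp (f := fun θ : ℝ => (t, θ, φ)) (by fun_prop) (fun θ hθ => ⟨ht, hθ, hφ⟩)
  have key : EqOn (fun p : ℝ × ℝ × ℝ => ((r ^ 2 - p.1 ^ 2) ^ 2 * Real.sin p.2.1 *
        (cgradNormSq Φ p.1 p.2.1 p.2.2 + (Φ p.1 p.2.1 p.2.2 + c) * cL Φ p.1 p.2.1 p.2.2)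
        - Real.sin p.2.1 * ((12 * p.1 ^ 2 - 4 * r ^ 2) - 4 * p.1 * (r ^ 2 - p.1 ^ 2)) *
          (Φ p.1 p.2.1 p.2.2 + c) ^ 2 / 2))
      (fun p => D1 p + D2 p + D3 p) (box (-r) r ε (π - ε) 0 (2 * π)) := by
    rintro ⟨t, θ, φ⟩ ⟨ht, hθ, hφ⟩
    have hs := (sinpos θ hθ).ne'
    simp only [D1, D2, D3, unc, cgradNormSq, cgradDot, gradDotS2, cL, lapS2, cdθ, cdφ]
    field_simp
    ring
  have i12 : IntegrableOn (fun p => D1 p + D2 p) (box (-r) r ε (π - ε) 0 (2 * π)) volume :=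
    i1.add i2
  have hm : MeasurableSet (box (-r) r ε (π - ε) 0 (2 * π)) := (isCompact_box ..).measurableSet
  refine ⟨(integrableOn_congr_fun key hm).2 (i12.add i3), ?_⟩
  rw [setIntegral_congr_fun hm key, integral_add i12 i3, integral_add i1 i2, e1, e3]
  linarith

lemma cont_grad {F : ℝ → ℝ → ℝ → ℝ} {n : WithTop ℕ∞} (hn : 1 ≤ n)
    (h : ContDiffOn ℝ n (unc F) regU) :
    ContinuousOn (fun p : ℝ × ℝ × ℝ => cgradNormSq F p.1 p.2.1 p.2.2) regU := by
  have hn' : (0 : WithTop ℕ∞) + 1 ≤ n := by simpa using hn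
  have h1 := (contDiff_t hn' h).continuousOn
  have h2 := (contDiff_θ hn' h).continuousOn
  have h3 := (contDiff_φ hn' h).continuousOn
  have csin : ContinuousOn (fun p : ℝ × ℝ × ℝ => (Real.sin p.2.1 ^ 2)⁻¹) regU := by
    refine ContinuousOn.inv₀ (by fun_prop) ?_
    rintro ⟨t, θ, φ⟩ ⟨_, h, _⟩
    exact (pow_pos (Real.sin_pos_of_pos_of_lt_pi h.1 h.2) 2).ne'
  have : ContinuousOn (fun p : ℝ × ℝ × ℝ => unc (cdt F) p * unc (cdt F) p +
    (unc (cdθ F) p * unc (cdθ F) p + (Real.sin p.2.1 ^ 2)⁻¹ * unc (cdφ F) p * unc (cdφ F) p))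
    regU := by fun_prop
  exact this

lemma grad_nonneg (F : ℝ → ℝ → ℝ → ℝ) (t θ φ : ℝ) : 0 ≤ cgradNormSq F t θ φ := by
  simp only [cgradNormSq, cgradDot, gradDotS2]
  have := mul_nonneg (inv_nonneg.2 (sq_nonneg (Real.sin θ))) (mul_self_nonneg (pdφ (F t) θ φ))
  nlinarith [mul_self_nonneg (cdt F t θ φ), mul_self_nonneg (pdθ (F t) θ φ)]

/-- a bound for the `θ`-derivative up to the poles -/
lemma dθ_bound {F : ℝ → ℝ → ℝ → ℝ} {r : ℝ} (hr : r < 2)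
    (h : ContDiffOn ℝ 3 (fun p : ℝ × ℝ × ℝ => F p.1 p.2.1 p.2.2)
      (Ioo (-2 : ℝ) 2 ×ˢ (Icc (0 : ℝ) π ×ˢ (univ : Set ℝ)))) :
    ∃ M : ℝ, ∀ t ∈ Icc (-r) r, ∀ θ ∈ Ioo 0 π, ∀ φ ∈ Icc 0 (2 * π), |cdθ F t θ φ| ≤ M := by
  have hu : UniqueDiffOn ℝ (Ioo (-2 : ℝ) 2 ×ˢ (Icc (0 : ℝ) π ×ˢ (univ : Set ℝ))) :=
    (uniqueDiffOn_Ioo _ _).prod ((uniqueDiffOn_Icc Real.pi_pos).prod uniqueDiffOn_univ)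
  have hc := h.continuousOn_fderivWithin hu (by norm_num)
  have hsub : box (-r) r 0 π 0 (2 * π) ⊆ Ioo (-2 : ℝ) 2 ×ˢ (Icc (0 : ℝ) π ×ˢ (univ : Set ℝ)) := by
    rintro ⟨t, θ, φ⟩ ⟨⟨h1, h2⟩, h3, -⟩
    exact ⟨⟨by dsimp only at *; linarith, by dsimp only at *; linarith⟩, h3, trivial⟩
  obtain ⟨M, hM⟩ := (isCompact_box (-r) r 0 π 0 (2 * π)).exists_bound_of_continuousOn (hc.mono hsub)
  refine ⟨M, ?_⟩
  intro t ht θ hθ φ hφ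
  have hU : (t, θ, φ) ∈ regU := ⟨⟨by linarith [ht.1], by linarith [ht.2]⟩, hθ, trivial⟩
  have hn : Ioo (-2 : ℝ) 2 ×ˢ (Icc (0 : ℝ) π ×ˢ (univ : Set ℝ)) ∈ nhds (t, θ, φ) :=
    mem_of_superset (isOpen_regU.mem_nhds hU) (by
      rintro ⟨t, θ, φ⟩ ⟨h1, h2, h3⟩
      exact ⟨h1, Ioo_subset_Icc_self h2, h3⟩)
  have hd : DifferentiableAt ℝ (unc F) (t, θ, φ) :=
    (h.differentiableOn (by norm_num) _ (mem_of_mem_nhds hn)).differentiableAt hn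
  have h1 := hM (t, θ, φ) ⟨ht, Ioo_subset_Icc_self hθ, hφ⟩
  rw [fderivWithin_of_mem_nhds hn] at h1
  have e : cdθ F t θ φ = fderiv ℝ (unc F) (t, θ, φ) (0, 1, 0) := (hasDeriv_θ hd).deriv
  rw [e, ← Real.norm_eq_abs]
  calc _ ≤ ‖fderiv ℝ (unc F) (t, θ, φ)‖ * ‖((0, 1, 0) : ℝ × ℝ × ℝ)‖ :=
        ContinuousLinearMap.le_opNorm _ _
    _ = ‖fderiv ℝ (unc F) (t, θ, φ)‖ := by simp [Prod.norm_def]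
    _ ≤ M := h1

lemma vol_box {r ε : ℝ} (hr0 : 0 < r) (hr : r < 2) (hε : 0 < ε) (hε2 : ε < π / 2) :
    (volume : Measure (ℝ × ℝ × ℝ)).real (box (-r) r ε (π - ε) 0 (2 * π)) ≤ 8 * π ^ 2 := by
  have hpi := Real.pi_pos
  unfold box
  rw [Measure.volume_eq_prod, measureReal_prod_prod, Measure.volume_eq_prod, measureReal_prod_prod]
  rw [Real.volume_real_Icc_of_le (by linarith), Real.volume_real_Icc_of_le (by linarith),
    Real.volume_real_Icc_of_le (by linarith)]
  have : (r - -r) ≤ 4 := by linarith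
  calc (r - -r) * ((π - ε - ε) * (2 * π - 0)) ≤ 4 * (π * (2 * π)) := by
        refine mul_le_mul this ?_ (mul_nonneg (by linarith) (by linarith)) (by norm_num)
        exact mul_le_mul (by linarith) (by linarith) (by linarith) hpi.le
    _ = _ := by ring

/-- the integrand of the energy -/
def enG (Φ v ω : ℝ → ℝ → ℝ → ℝ) (p : ℝ × ℝ × ℝ) : ℝ :=
  (cgradNormSq Φ p.1 p.2.1 p.2.2
    + Real.exp (4 * (Φ p.1 p.2.1 p.2.2 - Real.log (ω p.1 p.2.1 p.2.2)))
      * cgradNormSq v p.1 p.2.1 p.2.2) * Real.sin p.2.1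

lemma iter_eq {f : ℝ → ℝ → ℝ → ℝ} {R : ℝ}
    (h : IntegrableOn (fun p : ℝ × ℝ × ℝ => f p.1 p.2.1 p.2.2 * Real.sin p.2.1)
      (Ioo (-R) R ×ˢ (Ioo (0 : ℝ) π ×ˢ Ioo (0 : ℝ) (2 * π))) volume) :
    ∫ t in Ioo (-R) R, sphInt (fun θ φ => f t θ φ) =
      ∫ p in Ioo (-R) R ×ˢ (Ioo (0 : ℝ) π ×ˢ Ioo (0 : ℝ) (2 * π)),
        f p.1 p.2.1 p.2.2 * Real.sin p.2.1 := by
  rw [Measure.volume_eq_prod] at h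
  rw [Measure.volume_eq_prod, setIntegral_prod _ h]
  rw [IntegrableOn, ← Measure.prod_restrict] at h
  refine integral_congr_ae ?_
  filter_upwards [h.prod_right_ae] with t ht
  rw [Measure.volume_eq_prod] at ht
  rw [Measure.volume_eq_prod, setIntegral_prod _ ht]
  simp only [sphInt]
  refine integral_congr_ae (Eventually.of_forall fun θ => ?_)
  exact (integral_mul_const _ _).symm

/-- the pointwise inequality behind the estimate -/
lemma ptwise {Λ r t s w E gv gΦ : ℝ} (hΛ : 1 ≤ Λ) (hr0 : 0 < r) (hr2 : r < 2)
    (ht1 : -r ≤ t) (ht2 : t ≤ r) (hs : 0 < s) (hs1 : s ≤ 1) (hex : 0 < E) (g2 : 0 ≤ gv)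
    (w1 : Λ / 2 ≤ w) (w2 : w ≤ 5 * Λ / 2) :
    (r ^ 2 - t ^ 2) ^ 2 * ((gΦ + E * gv) * s) ≤
      (r ^ 2 - t ^ 2) ^ 2 * s * (gΦ + w * (2 * E * gv))
        - s * ((12 * t ^ 2 - 4 * r ^ 2) - 4 * t * (r ^ 2 - t ^ 2)) * w ^ 2 / 2
        + 200 * Λ ^ 2 := by
  have hEg : 0 ≤ E * gv := mul_nonneg hex.le g2
  have a1 : gΦ + E * gv ≤ gΦ + w * (2 * E * gv) := by nlinarith
  have a2 : (r ^ 2 - t ^ 2) ^ 2 * ((gΦ + E * gv) * s) ≤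
      (r ^ 2 - t ^ 2) ^ 2 * s * (gΦ + w * (2 * E * gv)) := by
    rw [mul_assoc, mul_comm s]
    gcongr
  have b0 : r ^ 2 ≤ 4 := by nlinarith
  have b1 : t ^ 2 ≤ r ^ 2 := by nlinarith
  have b2 : -(4 * t * (r ^ 2 - t ^ 2)) ≤ 32 := by
    have : -t * (r ^ 2 - t ^ 2) ≤ 2 * 4 :=
      mul_le_mul (by linarith) (by nlinarith) (by linarith) (by norm_num)
    linarith
  have b3 : (12 * t ^ 2 - 4 * r ^ 2) - 4 * t * (r ^ 2 - t ^ 2) ≤ 64 := by linarith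
  have b4 : s * ((12 * t ^ 2 - 4 * r ^ 2) - 4 * t * (r ^ 2 - t ^ 2)) ≤ 64 := by
    calc _ ≤ s * 64 := by gcongr
      _ ≤ 64 := by linarith
  have b5 : w ^ 2 ≤ 25 / 4 * Λ ^ 2 := by
    have : w ^ 2 ≤ (5 * Λ / 2) ^ 2 := pow_le_pow_left₀ (by linarith) w2 2
    nlinarith
  have b6 : s * ((12 * t ^ 2 - 4 * r ^ 2) - 4 * t * (r ^ 2 - t ^ 2)) * w ^ 2 ≤ 64 * w ^ 2 :=
    mul_le_mul_of_nonneg_right b4 (sq_nonneg _)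
  linarith

/-- Lemma `lem:local-bound`: interior energy estimate on the
cylinder for solutions of the renormalized harmonic map system with `L ln ω = 0`. -/
theorem statement_7
    (A₁ Λ a : ℝ) (Rω : Renormalizer (Ioo (-2) 2) A₁)
    (S : RHMSolution (Ioo (-2) 2) A₁ Rω Λ a)
    (hLω : ∀ t ∈ Ioo (-2 : ℝ) 2, ∀ θ ∈ Ioo (0 : ℝ) π, ∀ φ : ℝ,
      cL (fun t θ φ => Real.log (Rω.ω t θ φ)) t θ φ = 0) :
    ∀ R : ℝ, 0 < R → R < 2 →
      (∫ t in Ioo (-R) R, sphInt (fun θ φ =>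
          cgradNormSq S.Φ t θ φ
            + Real.exp (4 * (S.Φ t θ φ - Real.log (Rω.ω t θ φ)))
              * cgradNormSq S.v t θ φ))
        ≤ 5000 * Λ ^ 2 / (2 - R) ^ 2 := by
  intro R hR0 hR2
  have hpi := Real.pi_pos
  have hΛ := S.Λ_ge
  have hsubU : regU ⊆ Ioo (-2 : ℝ) 2 ×ˢ (Icc (0 : ℝ) π ×ˢ (univ : Set ℝ)) := by
    rintro ⟨t, θ, φ⟩ ⟨h1, h2, h3⟩
    exact ⟨h1, Ioo_subset_Icc_self h2, h3⟩
  have hΦ : ContDiffOn ℝ 3 (unc S.Φ) regU := S.regΦ.mono hsubU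
  have hv : ContDiffOn ℝ 3 (unc S.v) regU := S.regv.mono hsubU
  have cω : ContinuousOn (fun p : ℝ × ℝ × ℝ => Real.log (Rω.ω p.1 p.2.1 p.2.2)) regU := by
    refine ContinuousOn.log Rω.smooth.continuousOn ?_
    rintro ⟨t, θ, φ⟩ ⟨h1, h2, h3⟩
    exact (Rω.pos t h1 θ h2 φ).ne'
  have cΦ : ContinuousOn (fun p : ℝ × ℝ × ℝ => S.Φ p.1 p.2.1 p.2.2) regU := hΦ.continuousOn
  have cgΦ := cont_grad (by norm_num) hΦ
  have cgv := cont_grad (by norm_num) hv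
  have cG : ContinuousOn (enG S.Φ S.v Rω.ω) regU := by
    unfold enG; fun_prop
  have sinpos : ∀ θ ∈ Ioo (0 : ℝ) π, 0 < Real.sin θ := fun θ h =>
    Real.sin_pos_of_pos_of_lt_pi h.1 h.2
  have G0 : ∀ p ∈ regU, 0 ≤ enG S.Φ S.v Rω.ω p := by
    rintro ⟨t, θ, φ⟩ ⟨h1, h2, h3⟩
    have := grad_nonneg S.Φ t θ φ
    have := grad_nonneg S.v t θ φ
    have := sinpos θ h2
    simp only [enG]
    positivity
  -- integrability
  set V : Set (ℝ × ℝ × ℝ) := Ioo (-R) R ×ˢ (Ioo (0 : ℝ) π ×ˢ Ioo (0 : ℝ) (2 * π)) with hV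
  have mV : MeasurableSet V :=
    measurableSet_Ioo.prod (measurableSet_Ioo.prod measurableSet_Ioo)
  have VU : V ⊆ regU := by
    rintro ⟨t, θ, φ⟩ ⟨⟨h1, h2⟩, h3, -⟩
    exact ⟨⟨by dsimp only at *; linarith, by dsimp only at *; linarith⟩, h3, trivial⟩
  have GI : IntegrableOn (enG S.Φ S.v Rω.ω) V volume := by
    have hE := S.energy_loc (Icc (-R) R)
      (fun t ht => ⟨by linarith [ht.1], by linarith [ht.2]⟩) isCompact_Icc
    have hE2 := hE.mono_set (t := Icc (-R) R ×ˢ (Ioo (0 : ℝ) π ×ˢ Ioo (0 : ℝ) (2 * π))) (s := V)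
      (prod_mono Ioo_subset_Icc_self le_rfl)
    refine Integrable.mono' (hE2.const_mul (Real.exp (4 * Λ)))
      ((cG.mono VU).aestronglyMeasurable mV) ?_
    filter_upwards [ae_restrict_mem mV] with p hp
    have hpU := VU hp
    rw [Real.norm_of_nonneg (G0 p hpU)]
    obtain ⟨t, θ, φ⟩ := p
    obtain ⟨h1, h2, h3⟩ := hpU
    have g1 := grad_nonneg S.Φ t θ φ
    have g2 := grad_nonneg S.v t θ φ
    have hs := sinpos θ h2
    have hω := Rω.pos t h1 θ h2 φ
    have hb := (abs_le.1 (S.bddΦ t h1 θ (Ioo_subset_Icc_self h2) φ)).2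
    have e1 : Real.exp (4 * (S.Φ t θ φ - Real.log (Rω.ω t θ φ))) ≤
        Real.exp (4 * Λ) * ((Rω.ω t θ φ) ^ 4)⁻¹ := by
      have : ((Rω.ω t θ φ) ^ 4)⁻¹ = Real.exp (-(4 * Real.log (Rω.ω t θ φ))) := by
        rw [Real.exp_neg]
        congr 1
        rw [show (4 : ℝ) * Real.log (Rω.ω t θ φ) = ((4 : ℕ) : ℝ) * Real.log (Rω.ω t θ φ) by norm_num,
          Real.exp_nat_mul, Real.exp_log hω]
      rw [this, ← Real.exp_add]
      apply Real.exp_le_exp.2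
      linarith
    have e2 : 1 ≤ Real.exp (4 * Λ) := Real.one_le_exp (by linarith)
    simp only [enG]
    rw [← mul_assoc]
    refine mul_le_mul_of_nonneg_right ?_ hs.le
    rw [mul_add, ← mul_assoc]
    exact add_le_add (by nlinarith) (mul_le_mul_of_nonneg_right e1 g2)
  have hL := iter_eq (f := fun t θ φ => cgradNormSq S.Φ t θ φ
            + Real.exp (4 * (S.Φ t θ φ - Real.log (Rω.ω t θ φ)))
              * cgradNormSq S.v t θ φ) (R := R) GI
  rw [hL]
  change ∫ p in V, enG S.Φ S.v Rω.ω p ≤ _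
  -- cutoff radius
  obtain ⟨r, hr⟩ : ∃ r : ℝ, r = 2 - (2 - R) / 20 := ⟨_, rfl⟩
  have hrR : R < r := by linarith
  have hr2 : r < 2 := by linarith
  have hr0 : 0 < r := by linarith
  obtain ⟨M, hM⟩ := dθ_bound hr2 S.regΦ
  have hwb : ∀ t ∈ Ioo (-2 : ℝ) 2, ∀ θ ∈ Ioo 0 π, ∀ φ,
      Λ / 2 ≤ S.Φ t θ φ + 3 * Λ / 2 ∧ S.Φ t θ φ + 3 * Λ / 2 ≤ 5 * Λ / 2 := by
    intro t ht θ hθ φ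
    have := abs_le.1 (S.bddΦ t ht θ (Ioo_subset_Icc_self hθ) φ)
    constructor <;> linarith [this.1, this.2]
  have hK : ∀ t ∈ Icc (-r) r, ∀ θ ∈ Ioo 0 π, ∀ φ ∈ Icc 0 (2 * π),
      |(S.Φ t θ φ + 3 * Λ / 2) * cdθ S.Φ t θ φ| ≤ 5 * Λ / 2 * M := by
    intro t ht θ hθ φ hφ
    have hw := hwb t ⟨by linarith [ht.1], by linarith [ht.2]⟩ θ hθ φ
    rw [abs_mul]
    refine mul_le_mul ?_ (hM t ht θ hθ φ hφ) (abs_nonneg _) (by linarith)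
    rw [abs_of_nonneg (by linarith)]; exact hw.2
  have hK0 : 0 ≤ 5 * Λ / 2 * M := (abs_nonneg _).trans
    (hK 0 ⟨by linarith, by linarith⟩ (π / 2) ⟨by linarith, by linarith⟩ 0 ⟨le_rfl, by linarith⟩)
  set K := 5 * Λ / 2 * M with hKdef
  set m := (r ^ 2 - R ^ 2) ^ 2 with hm
  have hm0 : 0 < m := by
    have : 0 < r ^ 2 - R ^ 2 := by nlinarith
    positivity
  -- the estimate away from the poles
  have est : ∀ ε : ℝ, 0 < ε → ε < π / 2 →
      ∫ p in Ioo (-R) R ×ˢ (Icc ε (π - ε) ×ˢ Ioo (0 : ℝ) (2 * π)), enG S.Φ S.v Rω.ω p ≤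
        (1600 * π ^ 2 * Λ ^ 2 + 32 * K * ε * (2 * π - 0) * (r - -r)) / m := by
    intro ε hε hε2
    obtain ⟨HI, Hle⟩ := core (c := 3 * Λ / 2) (hΦ.of_le (by norm_num)) S.periodicΦ hr0 hr2 hε hε2 hK
    set B := box (-r) r ε (π - ε) 0 (2 * π) with hB
    have mB : MeasurableSet B := (isCompact_box ..).measurableSet
    have BU : B ⊆ regU := by
      rintro ⟨t, θ, φ⟩ ⟨⟨h1, h2⟩, ⟨h3, h4⟩, -⟩
      exact ⟨⟨by dsimp only at *; linarith, by dsimp only at *; linarith⟩,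
        ⟨by dsimp only at *; linarith, by dsimp only at *; linarith⟩, trivial⟩
    have WB : Ioo (-R) R ×ˢ (Icc ε (π - ε) ×ˢ Ioo (0 : ℝ) (2 * π)) ⊆ B :=
      prod_mono (fun t ht => ⟨by linarith [ht.1], by linarith [ht.2]⟩)
        (prod_mono le_rfl Ioo_subset_Icc_self)
    have mW : MeasurableSet (Ioo (-R) R ×ˢ (Icc ε (π - ε) ×ˢ Ioo (0 : ℝ) (2 * π))) :=
      measurableSet_Ioo.prod (measurableSet_Icc.prod measurableSet_Ioo)
    have cGB := cG.mono BU
    have ζI : IntegrableOn (fun p : ℝ × ℝ × ℝ => (r ^ 2 - p.1 ^ 2) ^ 2 * enG S.Φ S.v Rω.ω p) B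
        volume := by
      refine ContinuousOn.integrableOn_compact (isCompact_box ..) ?_
      fun_prop
    have GB : IntegrableOn (enG S.Φ S.v Rω.ω) B volume :=
      cGB.integrableOn_compact (isCompact_box ..)
    have s1 : m * ∫ p in Ioo (-R) R ×ˢ (Icc ε (π - ε) ×ˢ Ioo (0 : ℝ) (2 * π)),
        enG S.Φ S.v Rω.ω p ≤ ∫ p in B, (r ^ 2 - p.1 ^ 2) ^ 2 * enG S.Φ S.v Rω.ω p := by
      rw [← integral_const_mul]
      calc _ ≤ ∫ p in Ioo (-R) R ×ˢ (Icc ε (π - ε) ×ˢ Ioo (0 : ℝ) (2 * π)),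
            (r ^ 2 - p.1 ^ 2) ^ 2 * enG S.Φ S.v Rω.ω p := by
            refine setIntegral_mono_on ((GB.mono_set WB).const_mul m) (ζI.mono_set WB) mW ?_
            intro p hp
            refine mul_le_mul_of_nonneg_right ?_ (G0 p (BU (WB hp)))
            have h1 := hp.1.1
            have h2 := hp.1.2
            have : p.1 ^ 2 ≤ R ^ 2 := by nlinarith
            rw [hm]
            apply pow_le_pow_left₀ (by nlinarith)
            linarith
        _ ≤ _ := by
            refine setIntegral_mono_set ζI ?_ WB.eventuallyLE
            filter_upwards [ae_restrict_mem mB] with p hp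
            exact mul_nonneg (sq_nonneg _) (G0 p (BU hp))
    have cI : IntegrableOn (fun _ : ℝ × ℝ × ℝ => 200 * Λ ^ 2) B volume :=
      integrableOn_const (isCompact_box ..).measure_ne_top
    have s2 := setIntegral_mono_on ζI (HI.add cI) mB (by
      rintro ⟨t, θ, φ⟩ hp
      obtain ⟨h1, h2, h3⟩ := BU hp
      obtain ⟨⟨ht1, ht2⟩, -, -⟩ := hp
      dsimp only at h1 h2 ht1 ht2
      obtain ⟨w1, w2⟩ := hwb t h1 θ h2 φ
      have hs := sinpos θ h2
      have hs1 := Real.sin_le_one θ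
      have g2 := grad_nonneg S.v t θ φ
      have heq := S.eqΦ t h1 θ h2 φ
      rw [hLω t h1 θ h2 φ, add_zero] at heq
      have hex := Real.exp_pos (4 * (S.Φ t θ φ - Real.log (Rω.ω t θ φ)))
      simp only [enG, Pi.add_apply]
      rw [heq]
      exact ptwise hΛ hr0 hr2 ht1 ht2 hs hs1 hex g2 w1 w2)
    have s3 : ∫ p in B, (200 * Λ ^ 2) ≤ 200 * Λ ^ 2 * (8 * π ^ 2) := by
      rw [setIntegral_const, smul_eq_mul, mul_comm]
      exact mul_le_mul_of_nonneg_left (vol_box hr0 hr2 hε hε2) (by positivity)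
    simp only [Pi.add_apply] at s2
    rw [integral_add HI cI] at s2
    have s4 : 32 * K * Real.sin ε * (2 * π - 0) * (r - -r) ≤
        32 * K * ε * (2 * π - 0) * (r - -r) := by
      have := Real.sin_le hε.le
      have : 0 ≤ r - -r := by linarith
      have : 0 ≤ 2 * π - 0 := by linarith
      gcongr
    rw [le_div_iff₀ hm0, mul_comm]
    linarith
  -- exhaustion
  let W : ℕ → Set (ℝ × ℝ × ℝ) := fun n =>
    Ioo (-R) R ×ˢ (Icc (1 / ((n : ℝ) + 1)) (π - 1 / ((n : ℝ) + 1)) ×ˢ Ioo (0 : ℝ) (2 * π))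
  have Wm : ∀ n, MeasurableSet (W n) := fun n =>
    measurableSet_Ioo.prod (measurableSet_Icc.prod measurableSet_Ioo)
  have Wmono : Monotone W := by
    intro i j hij
    have : 1 / ((j : ℝ) + 1) ≤ 1 / ((i : ℝ) + 1) := by
      have : (i : ℝ) ≤ j := by exact_mod_cast hij
      gcongr
    exact prod_mono le_rfl (prod_mono (Icc_subset_Icc this (by linarith)) le_rfl)
  have WV : ⋃ n, W n = V := by
    ext ⟨t, θ, φ⟩
    simp only [mem_iUnion]
    constructor
    · rintro ⟨n, h1, h2, h3⟩
      have : 0 < 1 / ((n : ℝ) + 1) := by positivity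
      exact ⟨h1, ⟨lt_of_lt_of_le this h2.1, lt_of_le_of_lt h2.2 (by linarith)⟩, h3⟩
    · rintro ⟨h1, h2, h3⟩
      dsimp only at h1 h2 h3
      obtain ⟨n, hn⟩ := exists_nat_one_div_lt (show 0 < min θ (π - θ) from
        lt_min h2.1 (by linarith [h2.2]))
      have := lt_min_iff.1 hn
      exact ⟨n, h1, ⟨this.1.le, by dsimp only; linarith [this.2]⟩, h3⟩
  have T1 := tendsto_setIntegral_of_monotone Wm Wmono (by rw [WV]; exact GI)
  rw [WV] at T1
  have T2 : Tendsto (fun n : ℕ => (1600 * π ^ 2 * Λ ^ 2 +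
      32 * K * (1 / ((n : ℝ) + 1)) * (2 * π - 0) * (r - -r)) / m) atTop
      (nhds ((1600 * π ^ 2 * Λ ^ 2 + 32 * K * 0 * (2 * π - 0) * (r - -r)) / m)) :=
    ((((tendsto_one_div_add_atTop_nhds_zero_nat.const_mul _).mul_const _).mul_const _).const_add
      _).div_const _
  have fin := le_of_tendsto_of_tendsto' T1 T2 (fun n => est _ (by positivity) (by
    have : 1 / ((n : ℝ) + 1) ≤ 1 := by
      rw [div_le_one (by positivity)]; linarith [(Nat.cast_nonneg n : (0 : ℝ) ≤ n)]
    linarith [Real.pi_gt_three]))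
  refine fin.trans ?_
  have hd : 0 < 2 - R := by linarith
  rw [div_le_div_iff₀ hm0 (by positivity)]
  have m1 : 1.805 * (2 - R) ≤ r ^ 2 - R ^ 2 := by
    rw [show r ^ 2 - R ^ 2 = (r + R) * (r - R) by ring]
    have : r - R = 0.95 * (2 - R) := by rw [hr]; ring
    rw [this]
    nlinarith
  have m2 : 3.258 * (2 - R) ^ 2 ≤ m := by
    have := pow_le_pow_left₀ (by positivity) m1 2
    rw [hm]; nlinarith
  have p2 : π ^ 2 ≤ 9.87 := by
    have := Real.pi_lt_d4
    nlinarith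
  have q1 : 1600 * π ^ 2 ≤ 15792 := by linarith
  calc (1600 * π ^ 2 * Λ ^ 2 + 32 * K * 0 * (2 * π - 0) * (r - -r)) * (2 - R) ^ 2
      = 1600 * π ^ 2 * (Λ ^ 2 * (2 - R) ^ 2) := by ring
    _ ≤ 15792 * (Λ ^ 2 * (2 - R) ^ 2) := by gcongr
    _ ≤ 5000 * Λ ^ 2 * (3.258 * (2 - R) ^ 2) := by
        nlinarith [mul_nonneg (sq_nonneg Λ) (sq_nonneg (2 - R))]
    _ ≤ 5000 * Λ ^ 2 * m := by gcongr
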